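/- There is a constant C > 0 such that for all real y ≥ 2 and all (i, j) ∈ {0,1}² with (i, j) ≠ (0, 0): |Σ 1/√p₈(v,w) − (α₃ + α₄)/(6ζ(2)y^{1/4})| ≤ C·(log y)·y^{−3/8}, where the sum is over integer pairs (v, w) with 1 ≤ v < w, gcd(v, w) = 1, p₈(v,w) > y, v ≡ i (mod 2) and w ≡ j (mod 2). -/

import Mathlib

/-- p₈(v,w) = v⁸ + 14v⁴w⁴ + w⁸, as a real number, for integers v, w. -/
def p8R (v w : ℤ) : ℝ :=
  (v : ℝ) ^ 8 + 14 * (v : ℝ) ^ 4 * (w : ℝ) ^ 4 + (w : ℝ) ^ 8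

/-- p₈(u,1) = u⁸ + 14u⁴ + 1 for real u. -/
def p8u (u : ℝ) : ℝ := u ^ 8 + 14 * u ^ 4 + 1

/-!
Rescaling by `r = s ^ (1/8)` turns `p₈(v, w) ≤ s` into a dilated planar region, and the width
`upperBoundary v - v` of the part of the region above the diagonal is decreasing in `v`. Counting
lattice points of a residue class modulo 2 column by column, and comparing the sum of the widths
with its integral, gives `sectorArea / 4 * r ^ 2 + O(r)` points. Möbius inversion over the gcd then
counts the primitive points. A class other than (even, even) contains no point divisible by 2, so
only odd `d` occur and `∑ μ(d) / d ^ 2 = 4 / (3 ζ(2))`; the harmonic sum of the error terms produces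
the logarithm. Partial summation against `p₈ ^ (-1/2)` yields the sum in question.

The constant is `α₃ + α₄ = 2 * sectorArea`. Parametrizing the boundary by the slope `u = v / w`
shows that the sector has area `½ ∫ p₈(u, 1) ^ (-1/4) du`. In `α₄` the function `g` is inverse to
`u ↦ p₈(u, 1) ^ (1/4)`, so substituting this for `t` and integrating by parts gives
`α₄ = ∫ p₈(u, 1) ^ (-1/4) du - α₃`.
-/

open MeasureTheory Set Filter
open scoped ArithmeticFunction.Moebius

section Calculus

lemma integral_integral_of_leftInverse {a b : ℝ} {q q' g f : ℝ → ℝ}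
    (hq : ∀ u ∈ uIcc a b, HasDerivAt q (q' u) u) (hq' : ContinuousOn q' (uIcc a b))
    (hf : Continuous f) (hg : Continuous g) (hgq : ∀ u ∈ uIcc a b, g (q u) = u) :
    ∫ t in q a..q b, ∫ u in g t..b, f u =
      (∫ u in a..b, q u * f u) - q a * ∫ u in a..b, f u := by
  have hF (u : ℝ) : HasDerivAt (fun c ↦ ∫ x in c..b, f x) (-f u) u :=
    intervalIntegral.integral_hasDerivAt_left (hf.intervalIntegrable _ _)
      hf.aestronglyMeasurable.stronglyMeasurableAtFilter hf.continuousAt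
  have hFcont : Continuous fun c ↦ ∫ x in c..b, f x :=
    continuous_iff_continuousAt.2 fun u ↦ (hF u).continuousAt
  calc ∫ t in q a..q b, ∫ u in g t..b, f u
    _ = ∫ u in a..b, (∫ x in g (q u)..b, f x) * q' u :=
        (intervalIntegral.integral_comp_mul_deriv hq hq' (hFcont.comp hg)).symm
    _ = ∫ u in a..b, (∫ x in u..b, f x) * q' u :=
        intervalIntegral.integral_congr fun u hu ↦ by simp only [hgq u hu]
    _ = (∫ u in a..b, q u * f u) - q a * ∫ u in a..b, f u := by
        rw [intervalIntegral.integral_mul_deriv_eq_deriv_mul (fun u _ ↦ hF u) hq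
          (hf.neg.intervalIntegrable _ _) hq'.intervalIntegrable]
        simp only [intervalIntegral.integral_same, neg_mul, intervalIntegral.integral_neg,
          mul_comm (f _)]
        ring

lemma integral_sub_self_of_polar {ρ ρ' f : ℝ → ℝ}
    (hρ : ∀ u ∈ uIcc (0 : ℝ) 1, HasDerivAt ρ (ρ' u) u) (hρ' : ContinuousOn ρ' (uIcc 0 1))
    (hf : Continuous f) (hfρ : ∀ u ∈ uIcc (0 : ℝ) 1, f (u * ρ u) = ρ u) :
    ∫ v in (0 : ℝ)..ρ 1, (f v - v) = (∫ u in (0 : ℝ)..1, ρ u ^ 2) / 2 := by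
  have hρc : ContinuousOn ρ (uIcc 0 1) := fun u hu ↦ (hρ u hu).continuousAt.continuousWithinAt
  have hφ (u : ℝ) (hu : u ∈ uIcc (0 : ℝ) 1) :
      HasDerivAt (fun u ↦ u * ρ u) (ρ u + u * ρ' u) u := by
    simpa using (hasDerivAt_id' u).fun_mul (hρ u hu)
  let Ψ (u : ℝ) : ℝ := (u - u ^ 2) * ρ u ^ 2 / 2
  let Ψ' (u : ℝ) : ℝ := (1 - 2 * u) * ρ u ^ 2 / 2 + (u - u ^ 2) * (ρ u * ρ' u)
  have hΨ (u : ℝ) (hu : u ∈ uIcc (0 : ℝ) 1) : HasDerivAt Ψ (Ψ' u) u := by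
    convert! ((((hasDerivAt_id u).sub ((hasDerivAt_id u).pow 2)).mul
      ((hρ u hu).pow 2)).div_const 2) using 1
    simp only [Ψ', id, Pi.sub_apply, Pi.pow_apply]
    push_cast
    ring
  have hΨ' : IntervalIntegrable Ψ' volume 0 1 :=
    ContinuousOn.intervalIntegrable (by fun_prop)
  calc ∫ v in (0 : ℝ)..ρ 1, (f v - v)
    _ = ∫ v in 0 * ρ 0..1 * ρ 1, (f v - v) := by rw [zero_mul, one_mul]
    _ = ∫ u in (0 : ℝ)..1, (f (u * ρ u) - u * ρ u) * (ρ u + u * ρ' u) :=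
        (intervalIntegral.integral_comp_mul_deriv hφ (by fun_prop)
          (g := fun v ↦ f v - v) (by fun_prop)).symm
    _ = ∫ u in (0 : ℝ)..1, (ρ u ^ 2 / 2 + Ψ' u) :=
        intervalIntegral.integral_congr fun u hu ↦ by simp only [hfρ u hu, Ψ']; ring
    _ = (∫ u in (0 : ℝ)..1, ρ u ^ 2) / 2 + (Ψ 1 - Ψ 0) := by
        rw [intervalIntegral.integral_add (ContinuousOn.intervalIntegrable (by fun_prop)) hΨ',
          intervalIntegral.integral_eq_sub_of_hasDerivAt hΨ hΨ', intervalIntegral.integral_div]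
    _ = (∫ u in (0 : ℝ)..1, ρ u ^ 2) / 2 := by simp [Ψ]

end Calculus

section OcticForm

/-- The binary form `p₈` on real arguments: `p8R` is its restriction to `ℤ²` and `p8u u` its value
at `(u, 1)`. -/
def octic (v w : ℝ) : ℝ := v ^ 8 + 14 * v ^ 4 * w ^ 4 + w ^ 8

/-- The height `w` of the point with `v = u * w` on the curve `p₈(v, w) = 1`. -/
noncomputable def radius (u : ℝ) : ℝ := p8u u ^ (-1 / 8 : ℝ)

/-- For `0 ≤ v`, the largest `w ≥ v` with `p₈(v, w) ≤ 1`, and `v` itself when there is none. The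
radicals solve `(w ^ 4 + 7 * v ^ 4) ^ 2 = 48 * v ^ 8 + 1`, a rearrangement of `p₈(v, w) = 1`. -/
noncomputable def upperBoundary (v : ℝ) : ℝ := max v (√(√(√(48 * v ^ 8 + 1) - 7 * v ^ 4)))

/-- The area of the sector `0 ≤ v ≤ w`, `p₈(v, w) ≤ 1`, whose vertex on the diagonal is
`(radius 1, radius 1)`. -/
noncomputable def sectorArea : ℝ := ∫ v in (0 : ℝ)..radius 1, (upperBoundary v - v)

lemma octic_mul_mul (c v w : ℝ) : octic (c * v) (c * w) = c ^ 8 * octic v w := by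
  unfold octic; ring

lemma octic_mono {v v' w w' : ℝ} (hv : 0 ≤ v) (hvv' : v ≤ v') (hw : 0 ≤ w) (hww' : w ≤ w') :
    octic v w ≤ octic v' w' := by
  unfold octic
  gcongr

lemma p8u_pos (u : ℝ) : 0 < p8u u := by unfold p8u; positivity

lemma continuous_p8u : Continuous p8u := by unfold p8u; fun_prop

lemma continuous_p8u_rpow (a : ℝ) : Continuous fun u ↦ p8u u ^ a :=
  continuous_p8u.rpow_const fun u ↦ .inl (p8u_pos u).ne'

lemma hasDerivAt_p8u_rpow (a u : ℝ) :
    HasDerivAt (fun u ↦ p8u u ^ a) ((8 * u ^ 7 + 56 * u ^ 3) * a * p8u u ^ (a - 1)) u := by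
  have hp : HasDerivAt p8u (8 * u ^ 7 + 56 * u ^ 3) u := by
    convert! ((hasDerivAt_pow 8 u).add ((hasDerivAt_pow 4 u).const_mul 14)).add_const 1 using 1
    norm_num
    ring
  exact hp.rpow_const (.inl (p8u_pos u).ne')

lemma continuous_deriv_p8u_rpow (a : ℝ) :
    Continuous fun u ↦ (8 * u ^ 7 + 56 * u ^ 3) * a * p8u u ^ (a - 1) := by
  have := continuous_p8u_rpow (a - 1)
  fun_prop

lemma radius_pos (u : ℝ) : 0 < radius u := Real.rpow_pos_of_pos (p8u_pos u) _

lemma radius_pow_eight (u : ℝ) : radius u ^ 8 = (p8u u)⁻¹ := by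
  rw [radius, ← Real.rpow_mul_natCast (p8u_pos u).le, ← Real.rpow_neg_one]
  norm_num

lemma radius_one_le_one : radius 1 ≤ 1 :=
  Real.rpow_le_one_of_one_le_of_nonpos (by norm_num [p8u]) (by norm_num)

lemma self_le_upperBoundary (v : ℝ) : v ≤ upperBoundary v := le_max_left _ _

lemma continuous_upperBoundary : Continuous upperBoundary := by
  unfold upperBoundary; fun_prop

lemma upperBoundary_zero : upperBoundary 0 = 1 := by simp [upperBoundary]

lemma octic_le_one_iff {v w : ℝ} (hv : 0 ≤ v) (hvw : v < w) :
    octic v w ≤ 1 ↔ w ≤ upperBoundary v := by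
  have hw : 0 < w := hv.trans_lt hvw
  rw [upperBoundary, le_max_iff, or_iff_right hvw.not_ge, Real.le_sqrt' hw,
    Real.le_sqrt' (by positivity), le_sub_iff_add_le, Real.le_sqrt' (by positivity), octic]
  constructor <;> intro h <;> linarith

lemma octic_le_pow_eight_iff {r v w : ℝ} (hr : 0 < r) (hv : 0 ≤ v) (hvw : v < w) :
    octic v w ≤ r ^ 8 ↔ w ≤ r * upperBoundary (v / r) := by
  rw [← div_le_iff₀' hr, ← octic_le_one_iff (by positivity) (by gcongr),
    ← mul_le_iff_le_one_right (pow_pos hr 8), ← octic_mul_mul, mul_div_cancel₀ _ hr.ne',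
    mul_div_cancel₀ _ hr.ne']

lemma upperBoundary_sub_self_antitoneOn : AntitoneOn (fun v ↦ upperBoundary v - v) (Ici 0) := by
  intro a (ha : 0 ≤ a) b (hb : 0 ≤ b) hab
  rcases (self_le_upperBoundary b).eq_or_lt with hb_eq | hb_lt
  · simpa [← hb_eq] using self_le_upperBoundary a
  · have hle : upperBoundary b ≤ upperBoundary a :=
      (octic_le_one_iff ha (hab.trans_lt hb_lt)).1 <|
        (octic_mono ha hab (hb.trans hb_lt.le) le_rfl).trans ((octic_le_one_iff hb hb_lt).2 le_rfl)
    exact sub_le_sub hle hab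

lemma upperBoundary_eq_self {v : ℝ} (hv : radius 1 ≤ v) : upperBoundary v = v := by
  refine ((self_le_upperBoundary v).antisymm <| not_lt.1 fun hlt ↦ ?_).symm
  have hpos := (radius_pos 1).trans_le hv
  have hdiag : 1 ≤ octic v v := by
    have h8 := pow_le_pow_left₀ (radius_pos 1).le hv 8
    norm_num [radius_pow_eight, p8u] at h8
    unfold octic
    linarith
  have hstrict : octic v v < octic v (upperBoundary v) := by
    unfold octic
    exact add_lt_add_of_le_of_lt (by gcongr) (by gcongr)
  exact (hdiag.trans_lt hstrict).not_ge ((octic_le_one_iff hpos.le hlt).2 le_rfl)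

lemma upperBoundary_mul_radius {u : ℝ} (hu1 : u ≤ 1) :
    upperBoundary (u * radius u) = radius u := by
  have hρ := radius_pos u
  have hp : radius u ^ 8 * p8u u = 1 := by
    rw [radius_pow_eight, inv_mul_cancel₀ (p8u_pos u).ne']
  have hsq : 48 * (u * radius u) ^ 8 + 1 = (radius u ^ 4 * (7 * u ^ 4 + 1)) ^ 2 := by
    rw [p8u] at hp
    linear_combination -hp
  have hsub : radius u ^ 4 * (7 * u ^ 4 + 1) - 7 * (u * radius u) ^ 4 = ((radius u) ^ 2) ^ 2 := by
    ring
  rw [upperBoundary, hsq, Real.sqrt_sq (by positivity), hsub, Real.sqrt_sq (by positivity),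
    Real.sqrt_sq hρ.le, max_eq_right (mul_le_of_le_one_left hρ.le hu1)]

lemma sectorArea_eq_integral : sectorArea = (∫ u in (0 : ℝ)..1, p8u u ^ (-1 / 4 : ℝ)) / 2 := by
  rw [sectorArea, integral_sub_self_of_polar (ρ := radius)
    (fun u _ ↦ hasDerivAt_p8u_rpow (-1 / 8) u)
    (continuous_deriv_p8u_rpow _).continuousOn continuous_upperBoundary]
  · congr 1
    refine intervalIntegral.integral_congr fun u _ ↦ ?_
    rw [radius, ← Real.rpow_mul_natCast (p8u_pos u).le]
    norm_num
  · intro u hu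
    rw [uIcc_of_le zero_le_one] at hu
    exact upperBoundary_mul_radius hu.2

lemma sqrt_sub_seven_rpow_p8u_rpow {u : ℝ} (hu : 0 ≤ u) :
    (√((p8u u ^ (1 / 4 : ℝ)) ^ 4 + 48) - 7) ^ ((1 : ℝ) / 4) = u := by
  have hq : (p8u u ^ (1 / 4 : ℝ)) ^ 4 + 48 = (u ^ 4 + 7) ^ 2 := by
    rw [← Real.rpow_mul_natCast (p8u_pos u).le]
    norm_num [p8u]
    ring
  rw [hq, Real.sqrt_sq (by positivity), add_sub_cancel_right, ← Real.rpow_natCast_mul hu]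
  norm_num

lemma integral_add_integral_integral_eq_sectorArea {g : ℝ → ℝ}
    (hg : ∀ t, g t = (√(t ^ 4 + 48) - 7) ^ ((1 : ℝ) / 4)) :
    (∫ u in (0 : ℝ)..1, 1 / √(p8u u)) + ∫ t in (1 : ℝ)..2, ∫ u in g t..1, 1 / √(p8u u) =
      2 * sectorArea := by
  have hsqrt (u : ℝ) : 1 / √(p8u u) = p8u u ^ (-1 / 2 : ℝ) := by
    rw [Real.sqrt_eq_rpow, one_div (p8u u ^ _), ← Real.rpow_neg (p8u_pos u).le, neg_div]
  have hq0 : p8u 0 ^ (1 / 4 : ℝ) = 1 := by norm_num [p8u]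
  have hq1 : p8u 1 ^ (1 / 4 : ℝ) = 2 := by
    rw [show p8u 1 = 2 ^ 4 by norm_num [p8u], ← Real.rpow_natCast_mul zero_le_two]
    norm_num
  have hgc : Continuous g := by
    rw [funext hg]
    exact Continuous.rpow_const (by fun_prop) fun t ↦ .inr (by norm_num)
  have key := integral_integral_of_leftInverse (a := 0) (b := 1) (g := g)
    (fun u _ ↦ hasDerivAt_p8u_rpow (1 / 4) u) (continuous_deriv_p8u_rpow _).continuousOn
    (continuous_p8u_rpow (-1 / 2)) hgc fun u hu ↦ by
      rw [uIcc_of_le zero_le_one] at hu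
      rw [hg, sqrt_sub_seven_rpow_p8u_rpow hu.1]
  have hprod (u : ℝ) : p8u u ^ (1 / 4 : ℝ) * p8u u ^ (-1 / 2 : ℝ) = p8u u ^ (-1 / 4 : ℝ) := by
    rw [← Real.rpow_add (p8u_pos u)]
    norm_num
  simp only [hq0, hq1, hprod, one_mul] at key
  simp only [hsqrt, key, sectorArea_eq_integral]
  ring

end OcticForm

section CountingInCongruenceClasses

lemma abs_sum_sub_integral_le_of_antitoneOn {F : ℝ → ℝ} (hF : AntitoneOn F (Ici 0)) {R m c : ℝ}
    (hR : 0 ≤ R) (hFR : ∀ t, R ≤ t → F t = 0) (hm : 0 < m) (hc : c ∈ Icc 0 m) {n : ℕ}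
    (hn : R ≤ m * n) :
    |∑ k ∈ Finset.range n, F (m * k + c) - (∫ t in (0 : ℝ)..R, F t) / m| ≤ F 0 := by
  have hFi {a b : ℝ} (ha : 0 ≤ a) (hb : 0 ≤ b) : IntervalIntegrable F volume a b :=
    (hF.mono fun t ht ↦ (le_min ha hb).trans ht.1).intervalIntegrable
  have hintegral : ∫ t in (0 : ℝ)..n, F (m * t) = (∫ t in (0 : ℝ)..R, F t) / m := by
    have htail : ∫ t in R..m * n, F t = 0 := by
      rw [intervalIntegral.integral_congr (g := fun _ ↦ 0), intervalIntegral.integral_zero]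
      intro t ht
      rw [uIcc_of_le hn] at ht
      exact hFR t ht.1
    rw [intervalIntegral.integral_comp_mul_left _ hm.ne', mul_zero,
      ← intervalIntegral.integral_add_adjacent_intervals (hFi le_rfl hR)
        (hFi hR (hR.trans hn)), htail, add_zero, smul_eq_mul, inv_mul_eq_div]
  have hanti : AntitoneOn (fun t ↦ F (m * t)) (Icc 0 (0 + n)) := fun s hs t ht hst ↦
    hF (mul_nonneg hm.le hs.1) (mul_nonneg hm.le ht.1) (by gcongr)
  have hlower := hanti.integral_le_sum
  have hupper := hanti.sum_le_integral
  simp only [zero_add, hintegral] at hlower hupper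
  have hle : ∑ k ∈ Finset.range n, F (m * k + c) ≤ ∑ k ∈ Finset.range n, F (m * k) :=
    Finset.sum_le_sum fun k _ ↦ hF (mem_Ici.2 (by positivity))
      (mem_Ici.2 (add_nonneg (by positivity) hc.1)) (le_add_of_nonneg_right hc.1)
  have hge : ∑ k ∈ Finset.range n, F (m * (k + 1 : ℕ)) ≤
      ∑ k ∈ Finset.range n, F (m * k + c) :=
    Finset.sum_le_sum fun k _ ↦ hF (mem_Ici.2 (add_nonneg (by positivity) hc.1))
      (mem_Ici.2 (by positivity)) (by push_cast; linarith [hc.2])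
  have htelescope := Finset.sum_range_sub' (fun k : ℕ ↦ F (m * k)) n
  simp only [Finset.sum_sub_distrib, Nat.cast_zero, mul_zero, hFR _ hn] at htelescope
  rw [abs_le]
  constructor <;> linarith

lemma abs_sum_dilation_sub_integral_le_of_antitoneOn {F : ℝ → ℝ} (hF : AntitoneOn F (Ici 0))
    {R r m c : ℝ} (hR : 0 ≤ R) (hFR : ∀ t, R ≤ t → F t = 0) (hr : 0 < r) (hm : 1 ≤ m)
    (hc : c ∈ Icc 0 m) {n : ℕ} (hn : r * R ≤ m * n) :
    |(∑ k ∈ Finset.range n, r * F ((m * k + c) / r)) / m -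
      (∫ t in (0 : ℝ)..R, F t) / m ^ 2 * r ^ 2| ≤ r * F 0 := by
  have hm0 : 0 < m := zero_lt_one.trans_le hm
  let G (t : ℝ) : ℝ := r * F (t / r)
  have hG : AntitoneOn G (Ici 0) := fun s hs t ht hst ↦
    mul_le_mul_of_nonneg_left (hF (div_nonneg hs hr.le) (div_nonneg ht hr.le) (by gcongr)) hr.le
  have hGR (t : ℝ) (ht : r * R ≤ t) : G t = 0 := by
    simp only [G, hFR _ ((le_div_iff₀' hr).2 ht), mul_zero]
  have hG_int : ∫ t in (0 : ℝ)..r * R, G t = r ^ 2 * ∫ t in (0 : ℝ)..R, F t := by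
    rw [intervalIntegral.integral_const_mul, intervalIntegral.integral_comp_div F hr.ne',
      zero_div, mul_div_cancel_left₀ _ hr.ne', smul_eq_mul, ← mul_assoc, sq]
  have hsum := abs_sum_sub_integral_le_of_antitoneOn hG (by positivity) hGR hm0 hc hn
  have hdiv : ∀ S I : ℝ, S / m - I / m ^ 2 * r ^ 2 = (S - r ^ 2 * I / m) / m := by
    intro S I
    field_simp
  rw [hdiv, ← hG_int, abs_div, abs_of_pos hm0]
  calc _ ≤ G 0 := (div_le_self (abs_nonneg _) hm).trans hsum
    _ = r * F 0 := by simp only [G, zero_div]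

lemma abs_card_Ioc_filter_modEq_sub_le {m : ℕ} (hm : 0 < m) (j : ℤ) {v : ℤ} {x : ℝ}
    (hx : v ≤ x) :
    |(({w ∈ Finset.Ioc v ⌊x⌋ | w ≡ j [ZMOD m]}.card : ℕ) : ℝ) - (x - v) / m| ≤ 2 := by
  have hm' : (1 : ℝ) ≤ m := mod_cast hm
  have hvx : v ≤ ⌊x⌋ := Int.le_floor.2 hx
  have hcard : (({w ∈ Finset.Ioc v ⌊x⌋ | w ≡ j [ZMOD m]}.card : ℕ) : ℤ) =
      (⌊x⌋ - j) / m - (v - j) / m := by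
    have hmono : (v - j) / (m : ℤ) ≤ (⌊x⌋ - j) / m := Int.ediv_le_ediv (mod_cast hm) (by lia)
    have h := Int.Ioc_filter_modEq_card v ⌊x⌋ (Int.natCast_pos.2 hm) j
    simp only [Int.cast_natCast, ← Int.cast_sub, Rat.floor_intCast_div_natCast] at h
    rw [h, max_eq_left (sub_nonneg.2 hmono)]
  have hdiv (a : ℤ) : (a : ℝ) / m - 1 < (a / (m : ℤ) : ℤ) ∧ ((a / (m : ℤ) : ℤ) : ℝ) ≤ a / m := by
    have hfloor : a / (m : ℤ) = ⌊(a : ℝ) / m⌋ := by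
      rw [Int.floor_div_natCast, Int.floor_intCast]
    rw [hfloor]
    exact ⟨Int.sub_one_lt_floor _, Int.floor_le _⟩
  have hx1 : x / m - 1 ≤ ⌊x⌋ / m ∧ (⌊x⌋ : ℝ) / m ≤ x / m := by
    have hinv : (1 : ℝ) / m ≤ 1 := (div_le_one₀ (by positivity)).2 hm'
    have := (Int.sub_one_lt_floor x).le
    refine ⟨?_, by gcongr; exact Int.floor_le x⟩
    calc x / m - 1 ≤ (x - 1) / m := by rw [sub_div]; gcongr
      _ ≤ ⌊x⌋ / m := by gcongr
  have hu := hdiv (⌊x⌋ - j)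
  have hl := hdiv (v - j)
  rw [← Int.cast_natCast, hcard, abs_le, sub_div]
  push_cast [sub_div] at hu hl ⊢
  constructor <;> linarith

end CountingInCongruenceClasses

section PointsUnderAGraph

/-- The lattice points `(v, w)` with `0 < v < w` in a residue class modulo `m` that lie below the
graph of `f` dilated by the factor `r`. -/
def graphPoints (f : ℝ → ℝ) (m : ℕ) (i j : ℤ) (r : ℝ) : Set (ℤ × ℤ) :=
  {q | 0 < q.1 ∧ q.1 < q.2 ∧ (q.2 : ℝ) ≤ r * f (q.1 / r) ∧ q.1 ≡ i [ZMOD m] ∧ q.2 ≡ j [ZMOD m]}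

variable {f : ℝ → ℝ} {R r : ℝ} {m : ℕ}

lemma graphPoints_eq_image_sigma (hfR : ∀ x, R ≤ x → f x = x) (hm : 0 < m) (i j : ℤ)
    (hr : 0 < r) {n : ℕ} (hn : r * R ≤ m * n) :
    graphPoints f m i j r = (fun p : (_ : ℕ) × ℤ ↦ (m * p.1 + ((i - 1) % m + 1), p.2)) ''
      ((Finset.range n).sigma fun k ↦ {w ∈ Finset.Ioc (m * k + ((i - 1) % m + 1))
        ⌊r * f ((m * k + ((i - 1) % m + 1) : ℤ) / r)⌋ | w ≡ j [ZMOD m]} : Finset _) := by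
  have hm' : (0 : ℤ) < m := mod_cast hm
  have hc_nonneg := Int.emod_nonneg (i - 1) hm'.ne'
  ext ⟨v, w⟩
  simp only [graphPoints, mem_ofPred_eq, mem_image, Finset.mem_coe, Finset.mem_sigma,
    Finset.mem_range, Finset.mem_filter, Finset.mem_Ioc, Int.le_floor, Sigma.exists, Prod.mk.injEq]
  constructor
  · rintro ⟨hv, hvw, hwf, hvi, hwj⟩
    have hvR : (v : ℝ) < m * n := by
      refine lt_of_not_ge fun h ↦ ?_
      rw [hfR _ ((le_div_iff₀' hr).2 (hn.trans h)), mul_div_cancel₀ _ hr.ne'] at hwf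
      exact hvw.not_ge (mod_cast hwf)
    obtain ⟨k, hk⟩ : ∃ k : ℕ, v - 1 = m * k + (i - 1) % m := by
      refine ⟨((v - 1) / m).toNat, ?_⟩
      rw [Int.toNat_of_nonneg (Int.ediv_nonneg (by lia) hm'.le), ← (hvi.sub_right 1).eq,
        Int.mul_ediv_add_emod]
    have hv_eq : m * k + ((i - 1) % m + 1) = v := by lia
    refine ⟨k, w, ⟨?_, ?_⟩, hv_eq, rfl⟩
    · have : (m : ℤ) * k < m * n := by
        have : v < m * n := mod_cast hvR
        lia
      exact_mod_cast lt_of_mul_lt_mul_left this hm'.le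
    · rw [hv_eq]
      exact ⟨⟨hvw, hwf⟩, hwj⟩
  · rintro ⟨k, w, ⟨-, ⟨hvw, hwf⟩, hwj⟩, rfl, rfl⟩
    refine ⟨by positivity, hvw, hwf, ?_, hwj⟩
    calc (m * k + ((i - 1) % m + 1) : ℤ) ≡ (i - 1) % m + 1 [ZMOD m] := by
          simp [Int.ModEq]
      _ ≡ (i - 1) + 1 [ZMOD m] := (Int.mod_modEq _ _).add_right 1
      _ = i := by ring

lemma injective_mul_add_prodMk {m : ℕ} (hm : 0 < m) (c : ℤ) :
    Function.Injective fun p : (_ : ℕ) × ℤ ↦ ((m * p.1 + c, p.2) : ℤ × ℤ) := by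
  rintro ⟨k, w⟩ ⟨k', w'⟩ h
  simpa [hm.ne'] using h

lemma finite_graphPoints (hfR : ∀ x, R ≤ x → f x = x) (hm : 0 < m) (i j : ℤ) (hr : 0 < r) :
    (graphPoints f m i j r).Finite := by
  have hmR : r * R ≤ m * ⌈r * R⌉₊ := (Nat.le_ceil _).trans
    (le_mul_of_one_le_left (Nat.cast_nonneg _) (mod_cast hm))
  rw [graphPoints_eq_image_sigma hfR hm i j hr hmR]
  exact (Finset.finite_toSet _).image _

lemma ncard_graphPoints (hfR : ∀ x, R ≤ x → f x = x) (hm : 0 < m) (i j : ℤ) (hr : 0 < r) {n : ℕ}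
    (hn : r * R ≤ m * n) :
    (graphPoints f m i j r).ncard = ∑ k ∈ Finset.range n,
      {w ∈ Finset.Ioc (m * k + ((i - 1) % m + 1))
        ⌊r * f ((m * k + ((i - 1) % m + 1) : ℤ) / r)⌋ | w ≡ j [ZMOD m]}.card := by
  rw [graphPoints_eq_image_sigma hfR hm i j hr hn,
    ncard_image_of_injective _ (injective_mul_add_prodMk hm _), ncard_coe_finset,
    Finset.card_sigma]

lemma abs_ncard_graphPoints_sub_sum_le (hf : ∀ x, 0 ≤ x → x ≤ f x) (hfR : ∀ x, R ≤ x → f x = x)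
    (hm : 0 < m) (i j : ℤ) (hr : 0 < r) {n : ℕ} (hn : r * R ≤ m * n) :
    |(graphPoints f m i j r).ncard - (∑ k ∈ Finset.range n,
      r * (f ((m * k + ((i - 1) % m + 1 : ℤ)) / r) - (m * k + ((i - 1) % m + 1 : ℤ)) / r)) / m| ≤
      2 * n := by
  rw [ncard_graphPoints hfR hm i j hr hn, Finset.sum_div, Nat.cast_sum, ← Finset.sum_sub_distrib]
  refine (Finset.abs_sum_le_sum_abs _ _).trans ?_
  refine (Finset.sum_le_card_nsmul _ _ 2 fun k _ ↦ ?_).trans_eq (by simp [mul_comm])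
  set v : ℤ := m * k + ((i - 1) % m + 1) with hv
  have hv_nonneg : 0 ≤ v := by
    have := Int.emod_nonneg (i - 1) (Int.natCast_ne_zero.2 hm.ne')
    positivity
  have hv_cast : (m * k + ((i - 1) % m + 1 : ℤ) : ℝ) = v := by
    rw [hv]
    push_cast
    rfl
  have hvf : (v : ℝ) ≤ r * f (v / r) :=
    (div_le_iff₀' hr).1 (hf _ (div_nonneg (mod_cast hv_nonneg) hr.le))
  rw [hv_cast, mul_sub, mul_div_cancel₀ _ hr.ne']
  exact abs_card_Ioc_filter_modEq_sub_le hm j hvf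

lemma abs_ncard_graphPoints_sub_le (hf : AntitoneOn (fun x ↦ f x - x) (Ici 0)) (hR : 0 ≤ R)
    (hfR : ∀ x, R ≤ x → f x = x) (hm : 0 < m) (i j : ℤ) (hr : 1 ≤ r) :
    |(graphPoints f m i j r).ncard - (∫ x in (0 : ℝ)..R, (f x - x)) / m ^ 2 * r ^ 2| ≤
      (2 * (R + 1) + f 0) * r := by
  have hr0 : 0 < r := zero_lt_one.trans_le hr
  have hm1 : (1 : ℝ) ≤ m := mod_cast hm
  have hmR : r * R ≤ m * ⌈r * R⌉₊ :=
    (Nat.le_ceil _).trans (le_mul_of_one_le_left (Nat.cast_nonneg _) hm1)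
  have hc : ((((i - 1) % m + 1 : ℤ)) : ℝ) ∈ Icc 0 (m : ℝ) := by
    have h0 := Int.emod_nonneg (i - 1) (Int.natCast_ne_zero.2 hm.ne')
    have h1 := Int.emod_lt_of_pos (i - 1) (Int.natCast_pos.2 hm)
    exact ⟨mod_cast (by lia : 0 ≤ (i - 1) % m + 1), mod_cast (by lia : (i - 1) % m + 1 ≤ m)⟩
  have hf_ge (x : ℝ) (hx : 0 ≤ x) : x ≤ f x := by
    have h := hf hx (hx.trans (le_max_left _ R)) (le_max_left _ _)
    simpa [hfR _ (le_max_right x R)] using h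
  have hcolumns := abs_ncard_graphPoints_sub_sum_le hf_ge hfR hm i j hr0 hmR
  have hsum := abs_sum_dilation_sub_integral_le_of_antitoneOn hf hR
    (fun x hx ↦ by rw [hfR x hx, sub_self]) hr0 hm1 hc hmR
  calc _ ≤ 2 * ⌈r * R⌉₊ + r * (f 0 - 0) :=
        (abs_sub_le _ _ _).trans (add_le_add hcolumns hsum)
    _ ≤ (2 * (R + 1) + f 0) * r := by
        linarith [Nat.ceil_lt_add_one (show 0 ≤ r * R by positivity)]

end PointsUnderAGraph

section LatticePoints

/-- The lattice points of the open sector `0 < v < w` in the region `p₈(v, w) ≤ s` whose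
coordinates have the parities of `i` and `j`. -/
def latticePoints (i j : ℤ) (s : ℝ) : Set (ℤ × ℤ) :=
  {q | 0 < q.1 ∧ q.1 < q.2 ∧ p8R q.1 q.2 ≤ s ∧ q.1 ≡ i [ZMOD 2] ∧ q.2 ≡ j [ZMOD 2]}

lemma latticePoints_pow_eight (i j : ℤ) {r : ℝ} (hr : 0 < r) :
    latticePoints i j (r ^ 8) = graphPoints upperBoundary 2 i j r := by
  ext ⟨v, w⟩
  refine and_congr_right fun hv ↦ and_congr_right fun hvw ↦ and_congr_left' ?_
  exact octic_le_pow_eight_iff hr (mod_cast hv.le) (mod_cast hvw)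

lemma finite_latticePoints (i j : ℤ) {s : ℝ} (hs : 0 < s) : (latticePoints i j s).Finite := by
  rw [← Real.rpow_inv_natCast_pow hs.le (n := 8) (by norm_num),
    latticePoints_pow_eight i j (by positivity)]
  exact finite_graphPoints (fun v ↦ upperBoundary_eq_self) zero_lt_two i j (by positivity)

lemma abs_ncard_latticePoints_sub_le (i j : ℤ) {r : ℝ} (hr : 1 ≤ r) :
    |(latticePoints i j (r ^ 8)).ncard - sectorArea / 4 * r ^ 2| ≤ 5 * r := by
  have h := abs_ncard_graphPoints_sub_le upperBoundary_sub_self_antitoneOn (radius_pos 1).le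
    (fun v ↦ upperBoundary_eq_self) zero_lt_two i j hr
  rw [← latticePoints_pow_eight i j (zero_lt_one.trans_le hr), ← sectorArea,
    upperBoundary_zero] at h
  norm_num at h
  refine h.trans ?_
  gcongr
  linarith [radius_one_le_one]

end LatticePoints

section Moebius

lemma sum_moebius_divisors (n : ℕ) : ∑ d ∈ n.divisors, μ d = if n = 1 then 1 else 0 := by
  rw [← ArithmeticFunction.coe_mul_zeta_apply, ArithmeticFunction.moebius_mul_coe_zeta,
    ArithmeticFunction.one_apply]

lemma ncard_setOf_eq_one_eq_sum_moebius {α : Type*} {S : Set α} (hS : S.Finite) {f : α → ℕ}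
    {n : ℕ} (hf : ∀ x ∈ S, f x ∈ Finset.Ioc 0 n) :
    ({x ∈ S | f x = 1}.ncard : ℤ) = ∑ d ∈ Finset.Ioc 0 n, μ d * {x ∈ S | d ∣ f x}.ncard := by
  lift S to Finset α using hS
  have hncard (p : α → Prop) [DecidablePred p] :
      ({x ∈ (S : Set α) | p x}.ncard : ℤ) = ∑ x ∈ S, if p x then 1 else 0 := by
    rw [Finset.sum_boole, ← ncard_coe_finset, Finset.coe_filter]
    rfl
  have hdivisors (x : α) (hx : x ∈ S) :
      (if f x = 1 then 1 else 0) = ∑ d ∈ Finset.Ioc 0 n, if d ∣ f x then μ d else 0 := by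
    have hfx := Finset.mem_Ioc.1 (hf x hx)
    rw [← sum_moebius_divisors, ← Finset.sum_filter]
    refine Finset.sum_congr (Finset.ext fun d ↦ ?_) fun _ _ ↦ rfl
    simp only [Nat.mem_divisors, Finset.mem_filter, Finset.mem_Ioc]
    exact ⟨fun h ↦ ⟨⟨Nat.pos_of_dvd_of_pos h.1 hfx.1, (Nat.le_of_dvd hfx.1 h.1).trans hfx.2⟩, h.1⟩,
      fun h ↦ ⟨h.2, hfx.1.ne'⟩⟩
  simp only [hncard, Finset.sum_congr rfl hdivisors, Finset.mul_sum, mul_ite, mul_one, mul_zero]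
  exact Finset.sum_comm

/-- The Möbius function restricted to odd arguments. For `i`, `j` not both even, only odd `d` divide
lattice points in the class `(i, j)` modulo 2. -/
noncomputable def oddMoebius (d : ℕ) : ℝ := if Odd d then μ d else 0

/-- The primitive lattice points of the open sector `0 < v < w` whose coordinates have the parities
of `i` and `j`. -/
def primitivePoints (i j : ℤ) : Set (ℤ × ℤ) :=
  {q | 0 < q.1 ∧ q.1 < q.2 ∧ Int.gcd q.1 q.2 = 1 ∧ q.1 ≡ i [ZMOD 2] ∧ q.2 ≡ j [ZMOD 2]}

lemma setOf_primitivePoints_le (i j : ℤ) (s : ℝ) :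
    {q ∈ primitivePoints i j | p8R q.1 q.2 ≤ s} =
      {q ∈ latticePoints i j s | Int.gcd q.1 q.2 = 1} := by
  ext q
  simp only [primitivePoints, latticePoints, mem_ofPred_eq]
  tauto

lemma abs_oddMoebius_le_one (d : ℕ) : |oddMoebius d| ≤ 1 := by
  unfold oddMoebius
  split_ifs
  · exact_mod_cast ArithmeticFunction.abs_moebius_le_one
  · simp

lemma gcd_mem_Ioc_of_mem_latticePoints {i j : ℤ} {r : ℝ} (hr : 0 ≤ r) {q : ℤ × ℤ}
    (hq : q ∈ latticePoints i j (r ^ 8)) : Int.gcd q.1 q.2 ∈ Finset.Ioc 0 ⌊r⌋₊ := by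
  obtain ⟨hv, hvw, hle, -⟩ := hq
  have hw : (0 : ℝ) < q.2 := mod_cast hv.trans hvw
  have hwr : (q.2 : ℝ) ≤ r := by
    refine le_of_pow_le_pow_left₀ (n := 8) (by norm_num) hr (le_trans ?_ hle)
    unfold p8R
    exact le_add_of_nonneg_left (by positivity)
  have hgcd : ((Int.gcd q.1 q.2 : ℤ) : ℝ) ≤ q.2 :=
    mod_cast Int.le_of_dvd (hv.trans hvw) (Int.gcd_dvd_right ..)
  exact Finset.mem_Ioc.2 ⟨Int.gcd_pos_of_ne_zero_left _ hv.ne', Nat.le_floor (hgcd.trans hwr)⟩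

lemma setOf_dvd_gcd_latticePoints_of_odd (i j : ℤ) (s : ℝ) {d : ℕ} (hd : Odd d) :
    {q ∈ latticePoints i j s | d ∣ Int.gcd q.1 q.2} =
      (fun q : ℤ × ℤ ↦ (d * q.1, d * q.2)) '' latticePoints i j (s / d ^ 8) := by
  have hd0 : (0 : ℤ) < d := mod_cast hd.pos
  have hd0' : (0 : ℝ) < d := mod_cast hd.pos
  have hmod (a b : ℤ) : d * a ≡ b [ZMOD 2] ↔ a ≡ b [ZMOD 2] := by
    have h : (d : ℤ) * a ≡ 1 * a [ZMOD 2] :=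
      Int.ModEq.mul_right a (Int.odd_iff.1 (mod_cast hd))
    rw [one_mul] at h
    exact ⟨h.symm.trans, h.trans⟩
  have hmem (a b : ℤ) :
      (d * a, d * b) ∈ latticePoints i j s ↔ (a, b) ∈ latticePoints i j (s / d ^ 8) := by
    have hp : p8R (d * a) (d * b) = d ^ 8 * p8R a b := by
      simpa [octic, p8R] using octic_mul_mul d a b
    simp only [latticePoints, mem_ofPred_eq, hmod, hp, le_div_iff₀' (pow_pos hd0' 8),
      mul_pos_iff_of_pos_left hd0, mul_lt_mul_iff_right₀ hd0]
  ext ⟨v, w⟩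
  constructor
  · rintro ⟨hq, hdvd⟩
    obtain ⟨a, rfl⟩ := (Int.natCast_dvd_natCast.2 hdvd).trans (Int.gcd_dvd_left ..)
    obtain ⟨b, rfl⟩ := (Int.natCast_dvd_natCast.2 hdvd).trans (Int.gcd_dvd_right ..)
    exact ⟨(a, b), (hmem a b).1 hq, rfl⟩
  · rintro ⟨⟨a, b⟩, hab, h⟩
    obtain ⟨rfl, rfl⟩ := Prod.mk.inj h
    refine ⟨(hmem a b).2 hab, ?_⟩
    rw [Int.gcd_mul_left]
    exact dvd_mul_right _ _

lemma setOf_dvd_gcd_latticePoints_of_not_odd {i j : ℤ} (hij : ¬(Even i ∧ Even j)) (s : ℝ) {d : ℕ}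
    (hd : ¬Odd d) : {q ∈ latticePoints i j s | d ∣ Int.gcd q.1 q.2} = ∅ := by
  refine eq_empty_of_forall_notMem fun q ⟨⟨_, _, _, hvi, hwj⟩, hdvd⟩ ↦ hij ?_
  have h2 : (2 : ℤ) ∣ Int.gcd q.1 q.2 :=
    mod_cast (even_iff_two_dvd.1 (Nat.not_odd_iff_even.1 hd)).trans hdvd
  have hv := h2.trans (Int.gcd_dvd_left ..)
  have hw := h2.trans (Int.gcd_dvd_right ..)
  rw [even_iff_two_dvd, even_iff_two_dvd]
  exact ⟨hvi.dvd_iff .. |>.1 hv, hwj.dvd_iff .. |>.1 hw⟩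

lemma ncard_primitivePoints_eq_sum {i j : ℤ} (hij : ¬(Even i ∧ Even j)) {r : ℝ} (hr : 0 < r) :
    ({q ∈ primitivePoints i j | p8R q.1 q.2 ≤ r ^ 8}.ncard : ℝ) =
      ∑ d ∈ Finset.Ioc 0 ⌊r⌋₊, oddMoebius d * (latticePoints i j ((r / d) ^ 8)).ncard := by
  have h := ncard_setOf_eq_one_eq_sum_moebius (finite_latticePoints i j (pow_pos hr 8))
    fun q hq ↦ gcd_mem_Ioc_of_mem_latticePoints hr.le hq
  rw [setOf_primitivePoints_le, ← Int.cast_natCast, h, Int.cast_sum]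
  refine Finset.sum_congr rfl fun d _ ↦ ?_
  unfold oddMoebius
  split_ifs with hd
  · have hinj : Function.Injective fun q : ℤ × ℤ ↦ ((d * q.1, d * q.2) : ℤ × ℤ) :=
      fun p q hpq ↦ by simpa [hd.pos.ne', Prod.ext_iff] using hpq
    rw [setOf_dvd_gcd_latticePoints_of_odd i j _ hd, ncard_image_of_injective _ hinj, div_pow]
    push_cast
    rfl
  · simp [setOf_dvd_gcd_latticePoints_of_not_odd hij _ hd]

end Moebius

section WeightedDilations

variable {a : ℕ → ℝ}

lemma abs_div_sq_le (ha : ∀ d, |a d| ≤ 1) (d : ℕ) : |a d / d ^ 2| ≤ ((d : ℝ) ^ 2)⁻¹ := by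
  rw [abs_div, abs_of_nonneg (sq_nonneg (d : ℝ)), ← one_div]
  gcongr
  exact ha d

lemma abs_sum_Ioc_div_sq_sub_tsum_le (ha : ∀ d, |a d| ≤ 1) {n : ℕ} (hn : n ≠ 0) :
    |∑ d ∈ Finset.Ioc 0 n, a d / d ^ 2 - ∑' d : ℕ, a d / d ^ 2| ≤ (n : ℝ)⁻¹ := by
  have hsummable : Summable fun d : ℕ ↦ a d / d ^ 2 :=
    .of_norm_bounded (Real.summable_nat_pow_inv.2 one_lt_two) (abs_div_sq_le ha)
  have hIoc (m : ℕ) : ∑ d ∈ Finset.range (m + 1), a d / d ^ 2 =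
      ∑ d ∈ Finset.Ioc 0 m, a d / d ^ 2 := by
    rw [Finset.sum_range_eq_add_Ico _ m.succ_pos]
    simp [← Finset.Ico_add_one_add_one_eq_Ioc]
  have hlim := (hsummable.hasSum.tendsto_sum_nat.comp (tendsto_add_atTop_nat 1)).const_sub
    (∑ d ∈ Finset.Ioc 0 n, a d / d ^ 2)
  refine le_of_tendsto hlim.abs ?_
  filter_upwards [eventually_ge_atTop n] with m hm
  rw [Function.comp_apply, hIoc, ← Finset.sum_Ioc_consecutive _ n.zero_le hm, sub_add_cancel_left,
    abs_neg]
  calc |∑ d ∈ Finset.Ioc n m, a d / d ^ 2|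
    _ ≤ ∑ d ∈ Finset.Ioc n m, ((d : ℝ) ^ 2)⁻¹ :=
        (Finset.abs_sum_le_sum_abs _ _).trans (Finset.sum_le_sum fun d _ ↦ abs_div_sq_le ha d)
    _ ≤ (n : ℝ)⁻¹ - (m : ℝ)⁻¹ := sum_Ioc_inv_sq_le_sub hn hm
    _ ≤ (n : ℝ)⁻¹ := sub_le_self _ (by positivity)

lemma abs_sum_mul_comp_div_sub_le (ha : ∀ d, |a d| ≤ 1) {N : ℝ → ℝ} {A B : ℝ}
    (hN : ∀ r, 1 ≤ r → |N r - A * r ^ 2| ≤ B * r) {r : ℝ} (hr : 1 ≤ r) :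
    |∑ d ∈ Finset.Ioc 0 ⌊r⌋₊, a d * N (r / d) - A * r ^ 2 * ∑ d ∈ Finset.Ioc 0 ⌊r⌋₊, a d / d ^ 2| ≤
      B * r * (1 + Real.log r) := by
  have hr0 : 0 < r := zero_lt_one.trans_le hr
  have hB : 0 ≤ B := by simpa using (abs_nonneg _).trans (hN 1 le_rfl)
  have hterm (d : ℕ) (hd : d ∈ Finset.Ioc 0 ⌊r⌋₊) :
      |a d * N (r / d) - A * r ^ 2 * (a d / d ^ 2)| ≤ B * r * (d : ℝ)⁻¹ := by
    obtain ⟨hd0, hdr⟩ := Finset.mem_Ioc.1 hd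
    have hd0' : (0 : ℝ) < d := mod_cast hd0
    have hrd : 1 ≤ r / d := (one_le_div₀ hd0').2 ((Nat.le_floor_iff hr0.le).1 hdr)
    calc |a d * N (r / d) - A * r ^ 2 * (a d / d ^ 2)|
      _ = |a d| * |N (r / d) - A * (r / d) ^ 2| := by rw [← abs_mul]; congr 1; ring
      _ ≤ 1 * (B * (r / d)) := by gcongr; exacts [ha d, hN _ hrd]
      _ = B * r * (d : ℝ)⁻¹ := by ring
  have hharmonic : ∑ d ∈ Finset.Ioc 0 ⌊r⌋₊, (d : ℝ)⁻¹ ≤ 1 + Real.log r := by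
    have h := harmonic_floor_le_one_add_log r hr
    simpa [harmonic_eq_sum_Icc, ← Finset.Icc_add_one_left_eq_Ioc] using h
  rw [Finset.mul_sum, ← Finset.sum_sub_distrib]
  calc _ ≤ ∑ d ∈ Finset.Ioc 0 ⌊r⌋₊, B * r * (d : ℝ)⁻¹ :=
        (Finset.abs_sum_le_sum_abs _ _).trans (Finset.sum_le_sum hterm)
    _ ≤ B * r * (1 + Real.log r) := by rw [← Finset.mul_sum]; gcongr

lemma abs_sum_mul_comp_div_sub_tsum_le (ha : ∀ d, |a d| ≤ 1) {N : ℝ → ℝ} {A B : ℝ}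
    (hN : ∀ r, 1 ≤ r → |N r - A * r ^ 2| ≤ B * r) {r : ℝ} (hr : 1 ≤ r) :
    |∑ d ∈ Finset.Ioc 0 ⌊r⌋₊, a d * N (r / d) - A * (∑' d : ℕ, a d / d ^ 2) * r ^ 2| ≤
      (B + 2 * |A|) * (r * (1 + Real.log r)) := by
  have hfloor : 1 ≤ ⌊r⌋₊ := (Nat.one_le_floor_iff r).2 hr
  have hfloor' : (1 : ℝ) ≤ ⌊r⌋₊ := mod_cast hfloor
  have htail : |A * r ^ 2 * ∑ d ∈ Finset.Ioc 0 ⌊r⌋₊, a d / d ^ 2 -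
      A * (∑' d : ℕ, a d / d ^ 2) * r ^ 2| ≤ 2 * |A| * r := by
    calc _ = |A| * r ^ 2 *
          |∑ d ∈ Finset.Ioc 0 ⌊r⌋₊, a d / d ^ 2 - ∑' d : ℕ, a d / d ^ 2| := by
          rw [← abs_of_nonneg (sq_nonneg r), ← abs_mul, ← abs_mul, abs_of_nonneg (sq_nonneg r)]
          congr 1
          ring
      _ ≤ |A| * r ^ 2 * (2 / r) := by
          gcongr
          refine (abs_sum_Ioc_div_sq_sub_tsum_le ha (by lia)).trans ?_
          rw [← one_div, div_le_div_iff₀ (by positivity) (by positivity)]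
          linarith [Nat.lt_floor_add_one r]
      _ = 2 * |A| * r := by field_simp
  have hlog := Real.log_nonneg hr
  calc _ ≤ B * r * (1 + Real.log r) + 2 * |A| * r :=
        (abs_sub_le _ _ _).trans (add_le_add (abs_sum_mul_comp_div_sub_le ha hN hr) htail)
    _ ≤ (B + 2 * |A|) * (r * (1 + Real.log r)) := by
        have : 0 ≤ |A| * r * Real.log r := by positivity
        linarith

end WeightedDilations

section PrimitivePoints

lemma oddMoebius_eq_dirichletCharacter (d : ℕ) :
    (oddMoebius d : ℂ) = (1 : DirichletCharacter ℂ 2) d * μ d := by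
  have hunit : IsUnit (d : ZMod 2) ↔ Odd d := by
    rw [ZMod.isUnit_iff_coprime, Nat.coprime_two_right]
  rw [oddMoebius]
  split_ifs with hd
  · rw [MulChar.one_apply (hunit.2 hd), one_mul, Complex.ofReal_intCast]
  · rw [MulChar.map_nonunit _ (mt hunit.1 hd), zero_mul, Complex.ofReal_zero]

lemma tsum_oddMoebius_div_sq {z2 : ℝ} (hz2 : (z2 : ℂ) = riemannZeta 2) :
    ∑' d : ℕ, oddMoebius d / d ^ 2 = 4 / (3 * z2) := by
  have hs : 1 < (2 : ℂ).re := by norm_num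
  have hLSeries : LSeries ((fun d : ℕ ↦ (1 : DirichletCharacter ℂ 2) d) * fun d ↦ (μ d : ℂ)) 2 =
      ((∑' d : ℕ, oddMoebius d / d ^ 2 : ℝ) : ℂ) := by
    rw [Complex.ofReal_tsum]
    refine tsum_congr fun d ↦ ?_
    rcases eq_or_ne d 0 with rfl | hd
    · simp
    · rw [LSeries.term_of_ne_zero hd, Complex.cpow_ofNat, Pi.mul_apply,
        ← oddMoebius_eq_dirichletCharacter]
      push_cast
      rfl
  have hEuler : (3 / 4 * z2) * ∑' d : ℕ, oddMoebius d / d ^ 2 = 1 := by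
    have h := DirichletCharacter.LSeries.mul_mu_eq_one (1 : DirichletCharacter ℂ 2) hs
    have hL : DirichletCharacter.LFunction (1 : DirichletCharacter ℂ 2) 2 = 3 / 4 * z2 := by
      refine (DirichletCharacter.LFunctionTrivChar_eq_mul_riemannZeta (by norm_num)).trans ?_
      rw [Nat.prime_two.primeFactors, Finset.prod_singleton, Complex.cpow_neg, Nat.cast_two,
        Complex.cpow_ofNat, hz2]
      norm_num
    rw [← DirichletCharacter.LFunction_eq_LSeries _ hs, hLSeries, hL] at h
    rw [← Complex.ofReal_inj, Complex.ofReal_mul, Complex.ofReal_one, ← h]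
    norm_num
  have hz2_ne : z2 ≠ 0 := fun h ↦ by norm_num [h] at hEuler
  field_simp
  linarith

lemma abs_ncard_primitivePoints_sub_le {z2 : ℝ} (hz2 : (z2 : ℂ) = riemannZeta 2) {i j : ℤ}
    (hij : ¬(Even i ∧ Even j)) {r : ℝ} (hr : 1 ≤ r) :
    |{q ∈ primitivePoints i j | p8R q.1 q.2 ≤ r ^ 8}.ncard - sectorArea / (3 * z2) * r ^ 2| ≤
      (5 + |sectorArea| / 2) * (r * (1 + Real.log r)) := by
  have h := abs_sum_mul_comp_div_sub_tsum_le abs_oddMoebius_le_one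
    (N := fun r ↦ (latticePoints i j (r ^ 8)).ncard)
    (fun r hr ↦ abs_ncard_latticePoints_sub_le i j hr) hr
  rw [← ncard_primitivePoints_eq_sum hij (zero_lt_one.trans_le hr), tsum_oddMoebius_div_sq hz2] at h
  convert h using 2
  · ring_nf
  · rw [abs_div]
    norm_num
    ring

end PrimitivePoints

section PartialSummation

lemma lintegral_Ioi_indicator_rpow {p y θ : ℝ} (hy : 0 < y) (hp : y < p) (hθ : 0 < θ) :
    ∫⁻ s in Ioi y, (Ici p).indicator (fun s ↦ ENNReal.ofReal (θ * s ^ (-θ - 1))) s =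
      ENNReal.ofReal (p ^ (-θ)) := by
  have hp0 : 0 < p := hy.trans hp
  have hexp : -θ - 1 < -1 := by linarith
  rw [lintegral_indicator measurableSet_Ici, Measure.restrict_restrict measurableSet_Ici,
    inter_eq_left.2 (Ici_subset_Ioi.2 hp), ← restrict_Ioi_eq_restrict_Ici,
    ← ofReal_integral_eq_lintegral_ofReal ((integrableOn_Ioi_rpow_of_lt hexp hp0).const_mul θ),
    integral_const_mul, integral_Ioi_rpow_of_lt hexp hp0, sub_add_cancel, neg_div_neg_eq,
    mul_div_cancel₀ _ hθ.ne']
  filter_upwards [ae_restrict_mem measurableSet_Ioi] with s hs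
  have : 0 < s := hp0.trans hs
  positivity

lemma countable_of_finite_setOf_le {ι : Type*} {p : ι → ℝ} (hfin : ∀ s, {x | p x ≤ s}.Finite) :
    Countable ι := by
  rw [← countable_univ_iff]
  refine (countable_iUnion fun n : ℕ ↦ (hfin n).countable).mono fun x _ ↦ ?_
  exact mem_iUnion.2 (exists_nat_ge (p x))

lemma monotone_ncard_setOf_le {ι : Type*} {p : ι → ℝ} (hfin : ∀ s, {x | p x ≤ s}.Finite) :
    Monotone fun s ↦ {x | p x ≤ s}.ncard :=
  fun _ t hst ↦ ncard_le_ncard (fun _ hx ↦ le_trans hx hst) (hfin t)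

-- If the sum diverges, both sides take the junk value `0`.
lemma tsum_rpow_neg_eq_integral_ncard {ι : Type*} {p : ι → ℝ} {y θ : ℝ} (hy : 0 < y) (hθ : 0 < θ)
    (hp : ∀ x, y < p x) (hfin : ∀ s, {x | p x ≤ s}.Finite) :
    ∑' x, p x ^ (-θ) = ∫ s in Ioi y, θ * s ^ (-θ - 1) * {x | p x ≤ s}.ncard := by
  have := countable_of_finite_setOf_le hfin
  let w (s : ℝ) : ENNReal := ENNReal.ofReal (θ * s ^ (-θ - 1))
  have hw : Measurable w := by fun_prop
  have hcount (s : ℝ) (hs : s ∈ Ioi y) : ∑' x, (Ici (p x)).indicator w s =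
      ENNReal.ofReal (θ * s ^ (-θ - 1) * {x | p x ≤ s}.ncard) := by
    have hs0 : 0 < s := hy.trans hs
    calc ∑' x, (Ici (p x)).indicator w s
      _ = ∑' x, {x | p x ≤ s}.indicator (fun _ ↦ w s) x := rfl
      _ = {x | p x ≤ s}.encard * w s := by rw [← tsum_subtype, ENNReal.tsum_set_const]
      _ = ENNReal.ofReal (θ * s ^ (-θ - 1) * {x | p x ≤ s}.ncard) := by
        rw [← (hfin s).cast_ncard_eq, ENat.toENNReal_coe, mul_comm,
          ENNReal.ofReal_mul (by positivity), ENNReal.ofReal_natCast]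
  have hmeas : Measurable fun s ↦ ({x | p x ≤ s}.ncard : ℝ) :=
    (Nat.mono_cast.comp (monotone_ncard_setOf_le hfin)).measurable
  rw [integral_eq_lintegral_of_nonneg_ae, ← setLIntegral_congr_fun measurableSet_Ioi hcount,
    lintegral_tsum fun x ↦ (hw.indicator measurableSet_Ici).aemeasurable]
  · simp only [w, lintegral_Ioi_indicator_rpow hy (hp _) hθ]
    rw [ENNReal.tsum_toReal_eq fun x ↦ ENNReal.ofReal_ne_top]
    exact tsum_congr fun x ↦
      (ENNReal.toReal_ofReal (Real.rpow_nonneg (hy.trans (hp x)).le _)).symm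
  · filter_upwards [ae_restrict_mem measurableSet_Ioi] with s hs
    have : 0 < s := hy.trans hs
    positivity
  · exact Measurable.aestronglyMeasurable (by fun_prop)

lemma integrableOn_Ioi_rpow_mul_add {β θ y : ℝ} (hy : 0 < y) (hθ : 0 < θ) (hβθ : β < θ) (a b : ℝ) :
    IntegrableOn (fun s ↦ θ * s ^ (-θ - 1) * (a * s ^ β + b)) (Ioi y) ∧
    ∫ s in Ioi y, θ * s ^ (-θ - 1) * (a * s ^ β + b) =
      a * (θ / (θ - β)) * y ^ (β - θ) + b * y ^ (-θ) := by
  have hexp : -θ - 1 < -1 := by linarith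
  have hexp' : β - θ - 1 < -1 := by linarith
  have heq : EqOn (fun s ↦ a * θ * s ^ (β - θ - 1) + b * θ * s ^ (-θ - 1))
      (fun s ↦ θ * s ^ (-θ - 1) * (a * s ^ β + b)) (Ioi y) := by
    intro s hs
    have hs0 : 0 < s := hy.trans hs
    have : s ^ (β - θ - 1) = s ^ (-θ - 1) * s ^ β := by
      rw [← Real.rpow_add hs0]
      ring_nf
    simp only [this]
    ring
  have hi := (integrableOn_Ioi_rpow_of_lt hexp' hy).const_mul (a * θ)
  have hi' := (integrableOn_Ioi_rpow_of_lt hexp hy).const_mul (b * θ)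
  refine ⟨IntegrableOn.congr_fun (hi.add hi') heq measurableSet_Ioi, ?_⟩
  rw [← setIntegral_congr_fun measurableSet_Ioi heq, integral_add hi hi', integral_const_mul,
    integral_const_mul, integral_Ioi_rpow_of_lt hexp' hy, integral_Ioi_rpow_of_lt hexp hy,
    sub_add_cancel, sub_add_cancel, ← neg_sub θ β]
  have : θ - β ≠ 0 := (sub_pos.2 hβθ).ne'
  field_simp

variable {α : Type*} {S : Set α} {p : α → ℝ} {y : ℝ}

lemma finite_setOf_lt_and_le (hfin : ∀ s, y ≤ s → {x ∈ S | p x ≤ s}.Finite) (s : ℝ) :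
    {x : {x // x ∈ S ∧ y < p x} | p x ≤ s}.Finite := by
  refine Finite.of_finite_image ((hfin (max y s) (le_max_left _ _)).subset ?_)
    Subtype.val_injective.injOn
  rintro _ ⟨x, hx, rfl⟩
  exact ⟨x.2.1, hx.trans (le_max_right _ _)⟩

lemma ncard_setOf_lt_and_le (hfin : ∀ s, y ≤ s → {x ∈ S | p x ≤ s}.Finite) {s : ℝ} (hs : y ≤ s) :
    ({x : {x // x ∈ S ∧ y < p x} | p x ≤ s}.ncard : ℝ) =
      {x ∈ S | p x ≤ s}.ncard - {x ∈ S | p x ≤ y}.ncard := by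
  have hsub : {x ∈ S | p x ≤ y} ⊆ {x ∈ S | p x ≤ s} := fun x hx ↦ ⟨hx.1, hx.2.trans hs⟩
  rw [← Nat.cast_sub (ncard_le_ncard hsub (hfin s hs)), ← ncard_sdiff hsub (hfin y le_rfl),
    ← ncard_image_of_injective _ Subtype.val_injective]
  congr 2
  ext x
  simp only [mem_image, mem_ofPred_eq, Subtype.exists, Set.mem_sdiff, not_and, not_le]
  grind

lemma abs_tsum_rpow_neg_sub_le {β θ c E : ℝ} (hy : 0 < y) (hβθ : β < θ) (hθ : 0 < θ)
    (hfin : ∀ s, y ≤ s → {x ∈ S | p x ≤ s}.Finite)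
    (hN : ∀ s, y ≤ s → |{x ∈ S | p x ≤ s}.ncard - c * s ^ β| ≤ E * s ^ β) :
    |∑' x : {x // x ∈ S ∧ y < p x}, p x ^ (-θ) - c * (β / (θ - β)) * y ^ (β - θ)| ≤
      E * (θ / (θ - β) + 1) * y ^ (β - θ) := by
  have hfin' := finite_setOf_lt_and_le hfin
  let f (s : ℝ) : ℝ := θ * s ^ (-θ - 1) * {x : {x // x ∈ S ∧ y < p x} | p x ≤ s}.ncard
  let g (s : ℝ) : ℝ := θ * s ^ (-θ - 1) * (c * s ^ β + -c * y ^ β)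
  let h (s : ℝ) : ℝ := θ * s ^ (-θ - 1) * (E * s ^ β + E * y ^ β)
  have hf : Measurable f := by
    have : Measurable fun s ↦ ({x : {x // x ∈ S ∧ y < p x} | p x ≤ s}.ncard : ℝ) :=
      (Nat.mono_cast.comp (monotone_ncard_setOf_le hfin')).measurable
    fun_prop
  obtain ⟨hg, hg_int⟩ := integrableOn_Ioi_rpow_mul_add hy hθ hβθ c (-c * y ^ β)
  obtain ⟨hh, hh_int⟩ := integrableOn_Ioi_rpow_mul_add hy hθ hβθ E (E * y ^ β)
  have hfg : ∀ᵐ s ∂volume.restrict (Ioi y), ‖f s - g s‖ ≤ h s := by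
    filter_upwards [ae_restrict_mem measurableSet_Ioi] with s hs
    have hs0 : 0 < s := hy.trans hs
    simp only [f, g, h, ncard_setOf_lt_and_le hfin (le_of_lt hs)]
    rw [← mul_sub, norm_mul, Real.norm_of_nonneg (by positivity), Real.norm_eq_abs]
    gcongr
    have := (abs_sub _ _).trans (add_le_add (hN s (le_of_lt hs)) (hN y le_rfl))
    exact (congrArg _ (by ring)).trans_le this
  have hf_int : IntegrableOn f (Ioi y) :=
    integrable_of_norm_sub_le hf.aestronglyMeasurable hg hh
      (hfg.mono fun s hs ↦ (norm_sub_rev _ _).trans_le hs)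
  have key := norm_integral_le_of_norm_le hh hfg
  have hyβ : y ^ (β - θ) = y ^ β * y ^ (-θ) := by rw [← Real.rpow_add hy, sub_eq_add_neg]
  have hθβ : θ - β ≠ 0 := (sub_pos.2 hβθ).ne'
  rw [integral_sub hf_int hg, hg_int, hh_int,
    ← tsum_rpow_neg_eq_integral_ncard hy hθ (fun x ↦ x.2.2) hfin', Real.norm_eq_abs] at key
  convert key using 2
  · rw [hyβ]; field_simp; ring
  · rw [hyβ]; ring

end PartialSummation

section PrimitiveSum

lemma antitoneOn_one_add_log_div_self :
    AntitoneOn (fun r : ℝ ↦ (1 + Real.log r) / r) (Ici 1) := by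
  intro r (hr : 1 ≤ r) t (ht : 1 ≤ t) hrt
  have he := Real.exp_pos 1
  have heq {x : ℝ} (hx : 1 ≤ x) :
      (1 + Real.log x) / x = Real.exp 1 * (Real.log (Real.exp 1 * x) / (Real.exp 1 * x)) := by
    rw [Real.log_mul he.ne' (by positivity), Real.log_exp]
    field_simp
  simp only [heq hr, heq ht]
  exact mul_le_mul_of_nonneg_left (Real.log_div_self_antitoneOn (le_mul_of_one_le_right he.le hr)
    (le_mul_of_one_le_right he.le ht) (by gcongr)) he.le

lemma abs_ncard_primitivePoints_sub_le_of_le {z2 : ℝ} (hz2 : (z2 : ℂ) = riemannZeta 2) {i j : ℤ}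
    (hij : ¬(Even i ∧ Even j)) {y s : ℝ} (hy : 1 ≤ y) (hs : y ≤ s) :
    |{q ∈ primitivePoints i j | p8R q.1 q.2 ≤ s}.ncard -
      sectorArea / (3 * z2) * s ^ (1 / 4 : ℝ)| ≤
      (5 + |sectorArea| / 2) * ((1 + Real.log y / 8) * y ^ (-1 / 8 : ℝ)) * s ^ (1 / 4 : ℝ) := by
  have hy0 : 0 < y := zero_lt_one.trans_le hy
  have hs0 : 0 < s := hy0.trans_le hs
  have hr : 1 ≤ y ^ (1 / 8 : ℝ) := Real.one_le_rpow hy (by norm_num)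
  have hrs : y ^ (1 / 8 : ℝ) ≤ s ^ (1 / 8 : ℝ) := by gcongr
  have h := abs_ncard_primitivePoints_sub_le hz2 hij (hr.trans hrs)
  have hlog := antitoneOn_one_add_log_div_self hr (hr.trans hrs) hrs
  have hpow8 : (s ^ (1 / 8 : ℝ)) ^ 8 = s := by
    rw [← Real.rpow_mul_natCast hs0.le]
    norm_num
  have hpow2 : (s ^ (1 / 8 : ℝ)) ^ 2 = s ^ (1 / 4 : ℝ) := by
    rw [← Real.rpow_mul_natCast hs0.le]
    norm_num
  have hinv : y ^ (-1 / 8 : ℝ) = (y ^ (1 / 8 : ℝ))⁻¹ := by rw [← Real.rpow_neg hy0.le, neg_div]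
  rw [hpow8, hpow2] at h
  refine h.trans ?_
  rw [mul_assoc (5 + _), ← hpow2, hinv]
  refine mul_le_mul_of_nonneg_left ?_ (by positivity)
  dsimp only at hlog
  rw [div_le_iff₀ (by positivity), Real.log_rpow hy0] at hlog
  calc s ^ (1 / 8 : ℝ) * (1 + Real.log (s ^ (1 / 8 : ℝ)))
    _ ≤ s ^ (1 / 8 : ℝ) *
        ((1 + 1 / 8 * Real.log y) / y ^ (1 / 8 : ℝ) * s ^ (1 / 8 : ℝ)) := by gcongr
    _ = _ := by ring

lemma abs_tsum_primitivePoints_sub_le {z2 : ℝ} (hz2 : (z2 : ℂ) = riemannZeta 2) {i j : ℤ}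
    (hij : ¬(Even i ∧ Even j)) {y : ℝ} (hy : 2 ≤ y) :
    |∑' q : {q : ℤ × ℤ // q ∈ primitivePoints i j ∧ y < p8R q.1 q.2}, 1 / √(p8R q.1.1 q.1.2) -
      2 * sectorArea / (6 * z2 * y ^ (1 / 4 : ℝ))| ≤
      9 * (5 + |sectorArea| / 2) * Real.log y * y ^ (-3 / 8 : ℝ) := by
  have hy0 : 0 < y := zero_lt_two.trans_le hy
  have hlog : 1 + Real.log y / 8 ≤ 3 * Real.log y := by
    linarith [Real.log_two_gt_d9, Real.log_le_log zero_lt_two hy]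
  have hrpow (x : ℝ) (hx : 0 ≤ x) : x ^ (-(1 / 2) : ℝ) = 1 / √x := by
    rw [Real.sqrt_eq_rpow, Real.rpow_neg hx, one_div (x ^ _)]
  have h := abs_tsum_rpow_neg_sub_le (S := primitivePoints i j) (p := fun q ↦ p8R q.1 q.2)
    (β := 1 / 4) (θ := 1 / 2) hy0 (by norm_num) (by norm_num)
    (fun s hs ↦ by
      rw [setOf_primitivePoints_le]
      exact (finite_latticePoints i j (hy0.trans_le hs)).subset (sep_subset _ _))
    (fun s hs ↦ abs_ncard_primitivePoints_sub_le_of_le hz2 hij (by linarith) hs)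
  have hexp : y ^ (-3 / 8 : ℝ) = y ^ (-1 / 8 : ℝ) * y ^ (1 / 4 - 1 / 2 : ℝ) := by
    rw [← Real.rpow_add hy0]
    norm_num
  have hmain : sectorArea / (3 * z2) * (1 / 4 / (1 / 2 - 1 / 4)) * y ^ (1 / 4 - 1 / 2 : ℝ) =
      2 * sectorArea / (6 * z2 * y ^ (1 / 4 : ℝ)) := by
    rw [show (1 / 4 - 1 / 2 : ℝ) = -(1 / 4) by norm_num, Real.rpow_neg hy0.le]
    ring
  rw [hmain, tsum_congr fun q ↦ hrpow _ (hy0.trans q.2.2).le] at h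
  refine h.trans ?_
  rw [hexp]
  calc _ = 3 * (5 + |sectorArea| / 2) * (1 + Real.log y / 8) *
        (y ^ (-1 / 8 : ℝ) * y ^ (1 / 4 - 1 / 2 : ℝ)) := by ring
    _ ≤ 3 * (5 + |sectorArea| / 2) * (3 * Real.log y) *
        (y ^ (-1 / 8 : ℝ) * y ^ (1 / 4 - 1 / 2 : ℝ)) := by gcongr
    _ = _ := by ring

end PrimitiveSum

theorem stmt13 (z2 : ℝ) (hz2 : (z2 : ℂ) = riemannZeta 2)
    (α₃ α₄ : ℝ) (g : ℝ → ℝ)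
    (hg : ∀ t, g t = (Real.sqrt (t ^ 4 + 48) - 7) ^ ((1 : ℝ) / 4))
    (hα₃ : α₃ = ∫ u in (0 : ℝ)..1, 1 / Real.sqrt (p8u u))
    (hα₄ : α₄ = ∫ t in (1 : ℝ)..2, ∫ u in g t..1, 1 / Real.sqrt (p8u u)) :
    ∃ C > 0, ∀ y : ℝ, 2 ≤ y → ∀ i j : ℤ,
      (i = 0 ∨ i = 1) → (j = 0 ∨ j = 1) → ¬(i = 0 ∧ j = 0) →
      |(∑' q : {q : ℤ × ℤ // 1 ≤ q.1 ∧ q.1 < q.2 ∧ Int.gcd q.1 q.2 = 1 ∧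
          y < p8R q.1 q.2 ∧ q.1 % 2 = i ∧ q.2 % 2 = j},
          1 / Real.sqrt (p8R q.1.1 q.1.2)) -
        (α₃ + α₄) / (6 * z2 * y ^ ((1 : ℝ) / 4))| ≤ C * Real.log y * y ^ (-(3 : ℝ) / 8) := by
  refine ⟨9 * (5 + |sectorArea| / 2), by positivity, fun y hy i j hi hj hij ↦ ?_⟩
  have hparity : ¬(Even i ∧ Even j) := by
    rcases hi with rfl | rfl <;> rcases hj with rfl | rfl <;> simp_all
  have hset : {q : ℤ × ℤ | 1 ≤ q.1 ∧ q.1 < q.2 ∧ Int.gcd q.1 q.2 = 1 ∧ y < p8R q.1 q.2 ∧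
      q.1 % 2 = i ∧ q.2 % 2 = j} = {q | q ∈ primitivePoints i j ∧ y < p8R q.1 q.2} := by
    have hmod (a b : ℤ) (hb : b = 0 ∨ b = 1) : a % 2 = b ↔ a ≡ b [ZMOD 2] := by
      rcases hb with rfl | rfl <;> rfl
    ext q
    simp only [primitivePoints, mem_ofPred_eq, hmod _ i hi, hmod _ j hj, ← Order.one_le_iff_pos]
    tauto
  have hsum := tsum_congr_set_coe (fun q : ℤ × ℤ ↦ 1 / √(p8R q.1 q.2)) hset
  have harea := integral_add_integral_integral_eq_sectorArea hg
  rw [← hα₃, ← hα₄] at harea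
  rw [harea]
  exact (congrArg (|· - _|) hsum).trans_le (abs_tsum_primitivePoints_sub_le hz2 hparity hy)
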